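/- Let K be a normal subgroup of a group G, let q : G → G/K be the quotient homomorphism, and let H ≤ G be a subgroup containing K. If K is autostackable and the quotient Q = G/K is autostackable respecting the finitely generated subgroup q(H) ≤ Q, then G is autostackable respecting H. -/

import Mathlib

/-! A normal form of `G` is a normal form `u` of `K` followed by the letterwise lift `v̂` of a normal
form `v` of the quotient `Q = G/K`. The generators of `G` are those of `K`, a lift `â` of each
generator `a` of `Q`, and the formal inverses `â⁻¹` of these lifts. The inverses are separate
letters because the lift of the letter `a⁻¹` may differ from `â⁻¹` by an element of `K`; in
particular, a generator of `Q` that is its own formal inverse can have a lift of infinite order.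

The stacking function `ExtensionData.phi` at `u v̂` uses normality of `K`. A generator `c` of `K`
goes to `â⁻¹ k â`, where `a` is the last letter of `v` and `k` is a word over the generators of `K`
for `â c â⁻¹`; if `v` is empty, the stacking function of `K` is used. A lift `â` goes to the lift of
`φ_Q(v, a)` followed by a correcting word over the generators of `K`; if `v` ends in the letter
`a⁻¹`, it goes instead to the inverse of the last letter and a correction. A letter `â⁻¹` that does
not cancel goes to the lift of `a⁻¹` and a correction.

Termination is well-foundedness of the relation `StackingData.Step`, proved by accessibility of
the three kinds of letters in turn. Letters of `K` shorten `v` until `K` takes over (`acc_inl`),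
lifts run in parallel with the recursion of `Q` apart from letters of `K` (`acc_inr_true`), and
inverses of lifts reduce to the other two (`acc_inr_false`).

A stacking function over a finite alphabet has finitely many values, so its graph is synchronously
regular if and only if each fibre `{y ∈ N | φ(y, a) = w}` is regular (`regular_fiber`,
`isAuto_of_regular_fiber`). The value of `phi` at `u v̂` is determined by the last letter of `v`
and by the given stacking functions, whence regularity (`regular_phi`). It does not depend on `u`
except for letters of `K` when `v` is empty, and left translation by an element of `H` changes
only `u` and the part of `v` belonging to the image of `H`; so the structure respects `H`
(`respects`). -/

/-- Evaluation of a word over an alphabet `α` in a monoid `G` via a letter map `π`. -/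
def wordVal {G : Type} [Monoid G] {α : Type} (π : α → G) (w : List α) : G :=
  (w.map π).prod

/-- A language is prefix-closed if it contains every prefix of each of its words. -/
def PrefixClosed {α : Type} (N : Set (List α)) : Prop :=
  ∀ w ∈ N, ∀ p : List α, p <+: w → p ∈ N

/-- `(α, π, inv)` is a finite inverse-closed generating set for the group `G`:
no letter represents the identity, `inv` is an involution with `π (inv a) = (π a)⁻¹`,
and the letters generate `G`. -/
structure IsInvGenSet (G : Type) [Group G] {α : Type} (π : α → G) (inv : α → α) : Prop where
  ne_one : ∀ a, π a ≠ 1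
  inv_invol : ∀ a, inv (inv a) = a
  val_inv : ∀ a, π (inv a) = (π a)⁻¹
  gen : Subgroup.closure (Set.range π) = ⊤

/-- A language over `α` is regular if it is accepted by a finite state automaton. -/
def IsRegularLang {α : Type} (L : Set (List α)) : Prop :=
  ∃ (σ : Type) (_ : Fintype σ) (M : DFA α σ), M.accepts = L

/-- The padded word over `(α ∪ {$})²` corresponding to a pair of words;
`none` plays the role of the padding symbol `$`. -/
def padWord2 {α : Type} (p : List α × List α) : List (Option α × Option α) :=
  (List.range (max p.1.length p.2.length)).map (fun i => (p.1[i]?, p.2[i]?))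

/-- Synchronous regularity of a set of pairs of words. -/
def SyncRegular2 {α : Type} (L : Set (List α × List α)) : Prop :=
  IsRegularLang (padWord2 '' L)

/-- The padded word over `(α ∪ {$})³` corresponding to a triple of words. -/
def padWord3 {α : Type} (p : List α × List α × List α) :
    List (Option α × Option α × Option α) :=
  (List.range (max p.1.length (max p.2.1.length p.2.2.length))).map
    (fun i => (p.1[i]?, p.2.1[i]?, p.2.2[i]?))

/-- Synchronous regularity of a set of triples of words. -/
def SyncRegular3 {α : Type} (L : Set (List α × List α × List α)) : Prop :=
  IsRegularLang (padWord3 '' L)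

structure StackingData (α : Type) where
  N : Set (List α)
  K : ℕ
  phi : List α → α → List α

/-- `st` is a stackable structure for `G` over the finite inverse-closed generating
set `(α, π, inv)`. -/
structure IsStacking (G : Type) [Group G] {α : Type} (π : α → G) (inv : α → α)
    (st : StackingData α) : Prop where
  gen : IsInvGenSet G π inv
  nf : ∀ g : G, ∃! w, w ∈ st.N ∧ wordVal π w = g
  prefixClosed : PrefixClosed st.N
  F1 : ∀ y ∈ st.N, ∀ a : α, wordVal π (st.phi y a) = π a ∧ (st.phi y a).length ≤ st.K
  F2 : ∀ y ∈ st.N, ∀ a : α, (y ++ [a] ∈ st.N ∨ ∃ y', y = y' ++ [inv a]) → st.phi y a = [a]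
  F3 : ¬ ∃ seq : ℕ → List α × α,
      ∀ i : ℕ, (seq i).1 ∈ st.N ∧ (seq i).1 ++ [(seq i).2] ∉ st.N ∧
        (¬ ∃ y', (seq i).1 = y' ++ [inv (seq i).2]) ∧
        ∃ u u' : List α, st.phi (seq i).1 (seq i).2 = u ++ (seq (i+1)).2 :: u' ∧
          (seq (i+1)).1 ∈ st.N ∧
          wordVal π ((seq (i+1)).1) = wordVal π ((seq i).1 ++ u)

/-- The regularity conditions making a stackable structure autostackable:
the set of normal forms is regular and the graph of the stacking function is
synchronously regular. -/
def StackingData.IsAuto {α : Type} (st : StackingData α) : Prop :=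
  IsRegularLang st.N ∧
  SyncRegular3 {t : List α × List α × List α | ∃ y ∈ st.N, ∃ a : α, t = (y, [a], st.phi y a)}

/-- The stacking structure `st` respects the subgroup `H`. -/
def RespectsSubgroup {G : Type} [Group G] {α : Type} (π : α → G) (inv : α → α)
    (st : StackingData α) (H : Subgroup G) : Prop :=
  ∃ B : Set α,
    (∀ b ∈ B, inv b ∈ B) ∧
    (∀ b ∈ B, π b ∈ H) ∧
    Subgroup.closure (π '' B) = H ∧
    ∃ NH NTr : Set (List α),
      (∀ w ∈ NH, ∀ b ∈ w, b ∈ B) ∧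
      PrefixClosed NH ∧
      (∀ h : G, h ∈ H → ∃! w, w ∈ NH ∧ wordVal π w = h) ∧
      PrefixClosed NTr ∧
      (∀ g : G, ∃! w, w ∈ NTr ∧ wordVal π w * g⁻¹ ∈ H) ∧
      st.N = {w | ∃ u ∈ NH, ∃ v ∈ NTr, w = u ++ v} ∧
      (∀ y ∈ st.N, wordVal π y ∈ H → ∀ b ∈ B, ∀ c ∈ st.phi y b, c ∈ B) ∧
      (∀ a : α, ∀ y ∈ st.N, ∀ y' ∈ st.N,
        ¬(wordVal π y ∈ H ∧ a ∈ B) →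
        (∃ h ∈ H, wordVal π y' = h * wordVal π y) → st.phi y' a = st.phi y a)

/-- A group is autostackable if it admits an autostackable structure over some
finite inverse-closed generating set. -/
def Autostackable (G : Type) [Group G] : Prop :=
  ∃ (α : Type) (_ : Fintype α) (π : α → G) (inv : α → α) (st : StackingData α),
    IsStacking G π inv st ∧ st.IsAuto

/-- A group is stackable if it admits a stackable structure over some
finite inverse-closed generating set. -/
def Stackable (G : Type) [Group G] : Prop :=
  ∃ (α : Type) (_ : Fintype α) (π : α → G) (inv : α → α) (st : StackingData α),
    IsStacking G π inv st

/-- `G` is autostackable respecting the subgroup `H`. -/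
def AutostackableRespecting (G : Type) [Group G] (H : Subgroup G) : Prop :=
  ∃ (α : Type) (_ : Fintype α) (π : α → G) (inv : α → α) (st : StackingData α),
    IsStacking G π inv st ∧ st.IsAuto ∧ RespectsSubgroup π inv st H

/-- `G` is stackable respecting the subgroup `H`. -/
def StackableRespecting (G : Type) [Group G] (H : Subgroup G) : Prop :=
  ∃ (α : Type) (_ : Fintype α) (π : α → G) (inv : α → α) (st : StackingData α),
    IsStacking G π inv st ∧ RespectsSubgroup π inv st H

/-! ### Regular languages -/

/-- Being regular, with the automaton unfolded to a finite state set, a transition function,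
a start state and an accepting set. -/
theorem regular_iff {α : Type} {L : Set (List α)} :
    IsRegularLang L ↔ ∃ (σ : Type) (_ : Finite σ) (step : σ → α → σ) (s : σ) (acc : Set σ),
      ∀ w, w ∈ L ↔ w.foldl step s ∈ acc := by
  constructor
  · rintro ⟨σ, _, M, rfl⟩
    exact ⟨σ, inferInstance, M.step, M.start, M.accept, fun w => Iff.rfl⟩
  · rintro ⟨σ, _, step, s, acc, h⟩
    refine ⟨σ, Fintype.ofFinite σ, ⟨step, s, acc⟩, ?_⟩
    ext w
    exact (h w).symm

namespace IsRegularLang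

theorem inter {α : Type} {L L' : Set (List α)} (h : IsRegularLang L) (h' : IsRegularLang L') :
    IsRegularLang (L ∩ L') := by
  obtain ⟨σ, _, f, s, acc, h⟩ := regular_iff.1 h
  obtain ⟨σ', _, f', s', acc', h'⟩ := regular_iff.1 h'
  refine regular_iff.2 ⟨σ × σ', inferInstance, fun p a => (f p.1 a, f' p.2 a), (s, s'),
    {p | p.1 ∈ acc ∧ p.2 ∈ acc'}, fun w => ?_⟩
  have key : ∀ (w : List α) (p : σ × σ'), w.foldl (fun p a => (f p.1 a, f' p.2 a)) p
      = (w.foldl f p.1, w.foldl f' p.2) := by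
    intro w
    induction w with
    | nil => intro p; rfl
    | cons a w ih => intro p; simp [ih]
  simp [key, h, h']

theorem union {α : Type} {L L' : Set (List α)} (h : IsRegularLang L) (h' : IsRegularLang L') :
    IsRegularLang (L ∪ L') := by
  obtain ⟨σ, _, f, s, acc, h⟩ := regular_iff.1 h
  obtain ⟨σ', _, f', s', acc', h'⟩ := regular_iff.1 h'
  refine regular_iff.2 ⟨σ × σ', inferInstance, fun p a => (f p.1 a, f' p.2 a), (s, s'),
    {p | p.1 ∈ acc ∨ p.2 ∈ acc'}, fun w => ?_⟩
  have key : ∀ (w : List α) (p : σ × σ'), w.foldl (fun p a => (f p.1 a, f' p.2 a)) p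
      = (w.foldl f p.1, w.foldl f' p.2) := by
    intro w
    induction w with
    | nil => intro p; rfl
    | cons a w ih => intro p; simp [ih]
  simp [key, h, h']

theorem empty {α : Type} : IsRegularLang (∅ : Set (List α)) :=
  regular_iff.2 ⟨Unit, inferInstance, fun _ _ => (), (), ∅, by simp⟩

theorem biUnion {α ι : Type} {s : Set ι} (hs : s.Finite) {L : ι → Set (List α)}
    (h : ∀ i ∈ s, IsRegularLang (L i)) : IsRegularLang (⋃ i ∈ s, L i) := by
  induction s, hs using Set.Finite.induction_on with
  | empty => simpa using empty
  | insert _ _ ih =>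
    rw [Set.biUnion_insert]
    exact (h _ (Set.mem_insert _ _)).union (ih fun i hi => h i (Set.mem_insert_of_mem _ hi))

theorem iUnion {α ι : Type} [Finite ι] {L : ι → Set (List α)}
    (h : ∀ i, IsRegularLang (L i)) : IsRegularLang (⋃ i, L i) := by
  have := biUnion (s := (Set.univ : Set ι)) Set.finite_univ (L := L) (fun i _ => h i)
  simpa using this

/-- The set `{w | a w ∈ L}` of a regular language `L` is regular. -/
theorem deriv {α : Type} {L : Set (List α)} (h : IsRegularLang L) (a : α) :
    IsRegularLang {w | a :: w ∈ L} := by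
  obtain ⟨σ, _, f, s, acc, h⟩ := regular_iff.1 h
  exact regular_iff.2 ⟨σ, inferInstance, f, f s a, acc, fun w => by simp [h]⟩

/-- Over a finite alphabet, a language is regular as soon as all its quotients by single
letters are: the first letter read decides which automaton to run. -/
theorem of_deriv {α : Type} [Finite α] {L : Set (List α)}
    (h : ∀ a, IsRegularLang {w | a :: w ∈ L}) : IsRegularLang L := by
  choose σ hfin f s acc h using fun a => regular_iff.1 (h a)
  refine regular_iff.2 ⟨Option (Σ a, σ a), inferInstance,
    fun o b => match o with
      | none => some ⟨b, s b⟩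
      | some ⟨a, t⟩ => some ⟨a, f a t b⟩, none,
    {o | match o with
      | none => [] ∈ L
      | some ⟨a, t⟩ => t ∈ acc a}, fun w => ?_⟩
  cases w with
  | nil => rfl
  | cons b w =>
    have key : ∀ (w : List α) (a : α) (t : σ a), w.foldl
        (fun (o : Option (Σ a, σ a)) b => match o with
          | none => some ⟨b, s b⟩
          | some ⟨a, t⟩ => some ⟨a, f a t b⟩) (some ⟨a, t⟩) = some ⟨a, w.foldl (f a) t⟩ := by
      intro w
      induction w with
      | nil => intro a t; rfl
      | cons c w ih => intro a t; simp only [List.foldl_cons]; exact ih a (f a t c)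
    have := h b w
    simp only [Set.mem_ofPred_eq] at this
    rw [this, List.foldl_cons]
    simp only [key]
    rfl

theorem cons {α : Type} [Finite α] {L : Set (List α)} (h : IsRegularLang L) (a : α) :
    IsRegularLang {w | ∃ v ∈ L, w = a :: v} := by
  refine of_deriv fun b => ?_
  by_cases hb : b = a
  · subst hb
    simpa using h
  · simpa [hb] using empty

theorem singleton {α : Type} [Finite α] (w : List α) : IsRegularLang {w} := by
  induction w with
  | nil => exact of_deriv fun a => by simpa using empty
  | cons a w ih =>
    convert ih.cons a using 1
    ext v
    simp

theorem preimage_map {α β : Type} {L : Set (List β)} (h : IsRegularLang L) (g : α → β) :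
    IsRegularLang {w | w.map g ∈ L} := by
  obtain ⟨σ, _, f, s, acc, h⟩ := regular_iff.1 h
  exact regular_iff.2 ⟨σ, inferInstance, fun t a => f t (g a), s, acc,
    fun w => by simp [h, List.foldl_map]⟩

theorem preimage_filterMap {α β : Type} {L : Set (List β)} (h : IsRegularLang L)
    (g : α → Option β) : IsRegularLang {w | w.filterMap g ∈ L} := by
  obtain ⟨σ, _, f, s, acc, h⟩ := regular_iff.1 h
  exact regular_iff.2 ⟨σ, inferInstance, fun t a => match g a with
      | some b => f t b
      | none => t, s, acc,
    fun w => by simp only [Set.mem_ofPred_eq, h, List.foldl_filterMap]; rfl⟩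

theorem forall_mem {α : Type} (P : α → Prop) : IsRegularLang {w : List α | ∀ a ∈ w, P a} := by
  refine regular_iff.2 ⟨Prop, inferInstance, fun t a => t ∧ P a, True, {t | t}, fun w => ?_⟩
  have key : ∀ (w : List α) (t : Prop), w.foldl (fun t a => t ∧ P a) t ↔ t ∧ ∀ a ∈ w, P a := by
    intro w
    induction w with
    | nil => simp
    | cons a w ih => intro t; simp [ih, and_assoc]
  simp [key]

theorem getLast {α : Type} [Finite α] (S : Set (Option α)) :
    IsRegularLang {w : List α | w.getLast? ∈ S} := by
  refine regular_iff.2 ⟨Option α, inferInstance, fun _ a => some a, none, S, fun w => ?_⟩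
  induction w using List.reverseRecOn with
  | nil => rfl
  | append_singleton w a _ => simp

/-- The image of a regular language under a map of letters with a (partial) left inverse. -/
theorem image_map {α β : Type} {L : Set (List α)} (h : IsRegularLang L) (g : α → β)
    (r : β → Option α) (hr : ∀ a, r (g a) = some a) : IsRegularLang (List.map g '' L) := by
  have := (h.preimage_filterMap r).inter (forall_mem fun b => ∃ a, g a = b)
  convert this using 1
  ext w
  constructor
  · rintro ⟨v, hv, rfl⟩
    refine ⟨?_, by simp⟩
    have : (fun x => r (g x)) = some := funext hr
    simpa [List.filterMap_map, this] using hv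
  · rintro ⟨h1, h2⟩
    obtain ⟨v, rfl⟩ : ∃ v : List α, v.map g = w := by
      simpa [List.mem_map, Set.range] using (Set.range_list_map g ▸ h2 : w ∈ Set.range (List.map g))
    refine ⟨v, ?_, rfl⟩
    have : (fun x => r (g x)) = some := funext hr
    simpa [List.filterMap_map, this] using h1

end IsRegularLang

/-! ### Padded triples with two words of bounded length -/

theorem padWord3_getElem? {α : Type} (p : List α × List α × List α) (i : ℕ) :
    (padWord3 p)[i]? = if i < max p.1.length (max p.2.1.length p.2.2.length) then
      some (p.1[i]?, p.2.1[i]?, p.2.2[i]?) else none := by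
  unfold padWord3
  rw [List.getElem?_map]
  split_ifs with h
  · simp [List.getElem?_range h]
  · rw [List.getElem?_eq_none (by simpa using h)]; rfl

theorem padWord3_injective {α : Type} : Function.Injective (padWord3 (α := α)) := by
  rintro ⟨x, y, z⟩ ⟨x', y', z'⟩ h
  have key : ∀ (x y z : List α) (i : ℕ),
      ((padWord3 (x, y, z))[i]?).getD (none, none, none) = (x[i]?, y[i]?, z[i]?) := by
    intro x y z i
    rw [padWord3_getElem?]
    split_ifs with hi
    · rfl
    · simp only [lt_max_iff, not_or, not_lt] at hi
      simp [hi.1, hi.2.1, hi.2.2]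
  have h' : ∀ i : ℕ, (x[i]?, y[i]?, z[i]?) = (x'[i]?, y'[i]?, z'[i]?) := by
    intro i
    rw [← key, ← key, h]
  simp only [Prod.mk.injEq] at h' ⊢
  exact ⟨List.ext_getElem? fun i => (h' i).1, List.ext_getElem? fun i => (h' i).2.1,
    List.ext_getElem? fun i => (h' i).2.2⟩

theorem padWord3_cons {α : Type} (a : α) (y s t : List α) :
    padWord3 (a :: y, s, t) = (some a, s[0]?, t[0]?) :: padWord3 (y, s.tail, t.tail) := by
  apply List.ext_getElem?
  rintro (_ | i)
  · rw [padWord3_getElem?]; simp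
  · rw [List.getElem?_cons_succ, padWord3_getElem?, padWord3_getElem?]
    have : (i + 1 < max (a :: y).length (max s.length t.length)) ↔
        (i < max y.length (max s.tail.length t.tail.length)) := by
      simp only [List.length_cons, List.length_tail, lt_max_iff]; omega
    simp only [this]
    simp

theorem padWord3_nil_nil {α : Type} (y : List α) :
    padWord3 (y, [], []) = y.map fun a => (some a, none, none) := by
  induction y with
  | nil => rfl
  | cons a y ih => simp [padWord3_cons, ih]

/-- If the second and third words are fixed, the first words of the padded triples lying in a
regular language form a regular language. -/
theorem regular_preimage_padWord3 {α : Type} [Finite α] (n : ℕ) : ∀ (s t : List α),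
    s.length ≤ n → t.length ≤ n → ∀ L : Set (List (Option α × Option α × Option α)),
    IsRegularLang L → IsRegularLang {y | padWord3 (y, s, t) ∈ L} := by
  induction n with
  | zero =>
    intro s t hs ht L hL
    obtain rfl : s = [] := by simpa using hs
    obtain rfl : t = [] := by simpa using ht
    simp only [padWord3_nil_nil]
    exact hL.preimage_map _
  | succ n ih =>
    intro s t hs ht L hL
    refine IsRegularLang.of_deriv fun a => ?_
    simp only [Set.mem_ofPred_eq, padWord3_cons]
    exact ih s.tail t.tail (by simp; omega) (by simp; omega) _ (hL.deriv _)

/-- Padding the words of a regular language with two fixed words gives a regular language. -/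
theorem regular_image_padWord3 {α : Type} [Finite α] (n : ℕ) : ∀ (s t : List α),
    s.length ≤ n → t.length ≤ n → ∀ L : Set (List α),
    IsRegularLang L → IsRegularLang ((fun y => padWord3 (y, s, t)) '' L) := by
  induction n with
  | zero =>
    intro s t hs ht L hL
    obtain rfl : s = [] := by simpa using hs
    obtain rfl : t = [] := by simpa using ht
    simp only [padWord3_nil_nil]
    exact hL.image_map _ (fun b => b.1) (fun a => rfl)
  | succ n ih =>
    intro s t hs ht L hL
    have h1 : IsRegularLang (⋃ _ : PLift ([] ∈ L), {padWord3 (([] : List α), s, t)}) :=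
      IsRegularLang.iUnion fun _ => IsRegularLang.singleton _
    have h2 : IsRegularLang (⋃ a : α, {w | ∃ v ∈ (fun y => padWord3 (y, s.tail, t.tail)) ''
        {y | a :: y ∈ L}, w = (some a, s[0]?, t[0]?) :: v}) :=
      IsRegularLang.iUnion fun a =>
        (ih s.tail t.tail (by simp; omega) (by simp; omega) _ (hL.deriv a)).cons _
    convert h1.union h2 using 1
    ext w
    simp only [Set.mem_image, Set.mem_union, Set.mem_iUnion, Set.mem_singleton_iff,
      Set.mem_ofPred_eq]
    constructor
    · rintro ⟨y, hy, rfl⟩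
      cases y with
      | nil => exact Or.inl ⟨⟨hy⟩, rfl⟩
      | cons a y => exact Or.inr ⟨a, _, ⟨y, hy, rfl⟩, padWord3_cons _ _ _ _⟩
    · rintro (⟨⟨h⟩, rfl⟩ | ⟨a, _, ⟨y, hy, rfl⟩, rfl⟩)
      · exact ⟨[], h, rfl⟩
      · exact ⟨a :: y, hy, padWord3_cons _ _ _ _⟩

/-- In an autostackable structure, the words `y ∈ N` for which `φ(y, a)` has a prescribed value
form a regular language. -/
theorem regular_fiber {α : Type} [Finite α] {st : StackingData α} (h : st.IsAuto) (a : α)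
    (w : List α) : IsRegularLang {y | y ∈ st.N ∧ st.phi y a = w} := by
  have := regular_preimage_padWord3 (max 1 w.length) [a] w (by simp) (by simp) _ h.2
  convert this using 1
  ext y
  rw [Set.mem_ofPred_eq, Set.mem_ofPred_eq, padWord3_injective.mem_set_image]
  constructor
  · rintro ⟨hy, rfl⟩
    exact ⟨y, hy, a, rfl⟩
  · rintro ⟨y', hy', a', h⟩
    simp only [Prod.mk.injEq, List.cons.injEq, and_true] at h
    obtain ⟨rfl, rfl, rfl⟩ := h
    exact ⟨hy', rfl⟩

/-- Conversely, if `φ` takes finitely many values on `N × A` and all its fibres are regular,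
then its graph is synchronously regular. -/
theorem isAuto_of_regular_fiber {α : Type} [Finite α] {st : StackingData α}
    (hN : IsRegularLang st.N) (W : Set (List α)) (hW : W.Finite)
    (hphi : ∀ y ∈ st.N, ∀ a, st.phi y a ∈ W)
    (h : ∀ a w, IsRegularLang {y | y ∈ st.N ∧ st.phi y a = w}) : st.IsAuto := by
  refine ⟨hN, ?_⟩
  have := IsRegularLang.iUnion fun a : α => IsRegularLang.biUnion hW fun w _ =>
    regular_image_padWord3 (max 1 w.length) [a] w (by simp) (by simp) _ (h a w)
  unfold SyncRegular3
  convert this using 1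
  ext x
  simp only [Set.mem_image, Set.mem_iUnion, Set.mem_ofPred_eq, exists_prop]
  constructor
  · rintro ⟨_, ⟨y, hy, a, rfl⟩, rfl⟩
    exact ⟨a, _, hphi y hy a, y, ⟨hy, rfl⟩, rfl⟩
  · rintro ⟨a, w, _, y, ⟨hy, rfl⟩, rfl⟩
    exact ⟨_, ⟨y, hy, a, rfl⟩, rfl⟩

/-- The words `y ∈ N` with `φ(y, a) ∈ S` form a regular language, for an arbitrary set `S`,
since `φ` has bounded values. -/
theorem regular_fiber_set {G : Type} [Group G] {α : Type} [Finite α] {π : α → G} {inv : α → α}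
    {st : StackingData α} (hs : IsStacking G π inv st) (h : st.IsAuto) (a : α)
    (S : Set (List α)) : IsRegularLang {y | y ∈ st.N ∧ st.phi y a ∈ S} := by
  have hfin : (S ∩ {w : List α | w.length ≤ st.K}).Finite :=
    (List.finite_length_le α st.K).subset Set.inter_subset_right
  convert IsRegularLang.biUnion hfin fun w _ => regular_fiber h a w using 1
  ext y
  simp only [Set.mem_iUnion, Set.mem_ofPred_eq, exists_prop]
  constructor
  · rintro ⟨hy, hS⟩
    exact ⟨_, ⟨hS, (hs.F1 y hy a).2⟩, hy, rfl⟩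
  · rintro ⟨w, ⟨hS, _⟩, hy, rfl⟩
    exact ⟨hy, hS⟩

/-! ### Words and values -/

@[simp] theorem wordVal_nil {G : Type} [Monoid G] {α : Type} (π : α → G) :
    wordVal π [] = 1 := rfl

@[simp] theorem wordVal_cons {G : Type} [Monoid G] {α : Type} (π : α → G) (a : α) (w : List α) :
    wordVal π (a :: w) = π a * wordVal π w := by simp [wordVal]

@[simp] theorem wordVal_append {G : Type} [Monoid G] {α : Type} (π : α → G) (w w' : List α) :
    wordVal π (w ++ w') = wordVal π w * wordVal π w' := by simp [wordVal]

theorem wordVal_mem {G : Type} [Group G] {α : Type} (π : α → G) (S : Subgroup G) (w : List α)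
    (h : ∀ a ∈ w, π a ∈ S) : wordVal π w ∈ S := by
  induction w with
  | nil => exact S.one_mem
  | cons a w ih =>
    rw [wordVal_cons]
    exact S.mul_mem (h a (by simp)) (ih fun b hb => h b (by simp [hb]))

theorem append_eq_append_cons {α : Type} {l l' s s' : List α} {x : α}
    (h : l ++ l' = s ++ x :: s') :
    (∃ t, l = s ++ x :: t) ∨ ∃ t, s = l ++ t ∧ l' = t ++ x :: s' := by
  rcases List.append_eq_append_iff.1 h with ⟨t, h1, h2⟩ | ⟨t, h1, h2⟩
  · exact Or.inr ⟨t, h1, h2⟩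
  · cases t with
    | nil => exact Or.inr ⟨[], by simpa using h1.symm, by simpa using h2.symm⟩
    | cons b t =>
      simp only [List.cons_append, List.cons.injEq] at h2
      obtain ⟨rfl, _⟩ := h2
      exact Or.inl ⟨t, h1⟩

theorem prefix_append_cases {α : Type} {p l l' : List α} (h : p <+: l ++ l') :
    p <+: l ∨ ∃ q, q <+: l' ∧ p = l ++ q := by
  obtain ⟨r, h⟩ := h
  rcases List.append_eq_append_iff.1 h with ⟨t, h1, h2⟩ | ⟨t, h1, h2⟩
  · exact Or.inl ⟨t, h1.symm⟩
  · exact Or.inr ⟨t, ⟨r, h2.symm⟩, h1⟩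

theorem prefix_map_cases {α β : Type} {f : α → β} {p : List β} {l : List α} (h : p <+: l.map f) :
    ∃ q, q <+: l ∧ p = q.map f := by
  obtain ⟨r, h⟩ := h
  obtain ⟨t, t', rfl, rfl, _⟩ := List.map_eq_append_iff.1 h.symm
  exact ⟨t, ⟨t', rfl⟩, rfl⟩

theorem map_eq_append_cons {α β : Type} {f : α → β} {l : List α} {s s' : List β} {x : β}
    (h : l.map f = s ++ x :: s') :
    ∃ t a t', l = t ++ a :: t' ∧ s = t.map f ∧ x = f a := by
  obtain ⟨t, r, rfl, rfl, hr⟩ := List.map_eq_append_iff.1 h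
  obtain ⟨a, t', rfl, rfl, _⟩ := List.map_eq_cons_iff.1 hr
  exact ⟨t, a, t', rfl, rfl, rfl⟩

/-! ### The termination condition as well-foundedness -/

/-- The pair `(y, a)` is recursive: `y` is a normal form, `ya` is not, and `y` does not end in
the letter `a⁻¹`. -/
def StackingData.Recursive {α : Type} (st : StackingData α) (inv : α → α) (p : List α × α) :
    Prop :=
  p.1 ∈ st.N ∧ p.1 ++ [p.2] ∉ st.N ∧ ¬ ∃ y', p.1 = y' ++ [inv p.2]

/-- `st.Step π inv p' p` means that the recursive pair `p'` occurs when the letter of the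
recursive pair `p` is replaced by its stacking image. -/
def StackingData.Step {G : Type} [Group G] {α : Type} (st : StackingData α) (π : α → G)
    (inv : α → α) (p' p : List α × α) : Prop :=
  st.Recursive inv p ∧ st.Recursive inv p' ∧ ∃ u u' : List α, st.phi p.1 p.2 = u ++ p'.2 :: u' ∧
    wordVal π p'.1 = wordVal π (p.1 ++ u)

/-- Condition (F3) says precisely that the relation `Step` is well-founded. -/
theorem wellFounded_step_iff {G : Type} [Group G] {α : Type} {st : StackingData α} {π : α → G}
    {inv : α → α} : WellFounded (st.Step π inv) ↔
    ¬ ∃ seq : ℕ → List α × α,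
      ∀ i : ℕ, (seq i).1 ∈ st.N ∧ (seq i).1 ++ [(seq i).2] ∉ st.N ∧
        (¬ ∃ y', (seq i).1 = y' ++ [inv (seq i).2]) ∧
        ∃ u u' : List α, st.phi (seq i).1 (seq i).2 = u ++ (seq (i+1)).2 :: u' ∧
          (seq (i+1)).1 ∈ st.N ∧
          wordVal π ((seq (i+1)).1) = wordVal π ((seq i).1 ++ u) := by
  rw [wellFounded_iff_isEmpty_descending_chain, ← not_nonempty_iff, not_iff_not]
  constructor
  · rintro ⟨f, hf⟩
    refine ⟨f, fun i => ?_⟩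
    obtain ⟨⟨h1, h2, h3⟩, h4, u, u', h5, h6⟩ := hf i
    exact ⟨h1, h2, h3, u, u', h5, h4.1, h6⟩
  · rintro ⟨f, hf⟩
    refine ⟨⟨f, fun i => ?_⟩⟩
    obtain ⟨h1, h2, h3, u, u', h5, h4, h6⟩ := hf i
    obtain ⟨h1', h2', h3', _⟩ := hf (i + 1)
    exact ⟨⟨h1, h2, h3⟩, ⟨h1', h2', h3'⟩, u, u', h5, h6⟩

namespace IsStacking

variable {G : Type} [Group G] {α : Type} {π : α → G} {inv : α → α} {st : StackingData α}

theorem eq_of_val (hs : IsStacking G π inv st) {y y' : List α} (hy : y ∈ st.N) (hy' : y' ∈ st.N)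
    (h : wordVal π y = wordVal π y') : y = y' :=
  (hs.nf (wordVal π y')).unique ⟨hy, h⟩ ⟨hy', rfl⟩

theorem nil_mem (hs : IsStacking G π inv st) : [] ∈ st.N := by
  obtain ⟨w, ⟨hw, _⟩, _⟩ := hs.nf 1
  exact hs.prefixClosed w hw _ ⟨w, rfl⟩

/-- A normal form which ends in `a⁻¹` cannot be prolonged by `a`. -/
theorem append_notMem (hs : IsStacking G π inv st) {y : List α} {a : α}
    (h : y.getLast? = some (inv a)) : y ++ [a] ∉ st.N := by
  intro hy
  obtain ⟨y', rfl⟩ := List.getLast?_eq_some_iff.1 h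
  have hy' : y' ∈ st.N := hs.prefixClosed _ hy _ ⟨[inv a, a], by simp⟩
  have := hs.eq_of_val hy hy' (by simp [hs.gen.val_inv])
  simpa using congrArg List.length this

end IsStacking

/-! ### The stacking structure on the extension -/

/-- Stacking structures for a normal subgroup `K` and for the quotient `G ⧸ K`, together with a
lift to `G` of each generator of the quotient. -/
structure ExtensionData {G : Type} [Group G] (K : Subgroup G) [K.Normal] (C A : Type) where
  /-- Values of the generators of `K`. -/
  πK : C → K
  /-- Formal inverses of the generators of `K`. -/
  invK : C → C
  /-- Normal forms and stacking function of `K`. -/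
  stK : StackingData C
  hK : IsStacking K πK invK stK
  /-- Values of the generators of the quotient. -/
  πQ : A → G ⧸ K
  /-- Formal inverses of the generators of the quotient. -/
  invQ : A → A
  /-- Normal forms and stacking function of the quotient. -/
  stQ : StackingData A
  hQ : IsStacking (G ⧸ K) πQ invQ stQ
  /-- Chosen representatives in `G` of the generators of the quotient. -/
  lift : A → G
  hlift : ∀ a, QuotientGroup.mk' K (lift a) = πQ a

namespace ExtensionData

variable {G : Type} [Group G] {K : Subgroup G} [K.Normal] {C A : Type}
  (D : ExtensionData K C A)

/-- Values of the generators of `G`: besides the generators of `K` there are, for every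
generator `a` of the quotient, a letter `(a, true)` for the chosen lift of `a` and a letter
`(a, false)` for the inverse of this lift. The latter is never identified with the lift of
`a⁻¹`, which may differ from it by an element of `K`. -/
def val : C ⊕ A × Bool → G
  | .inl c => D.πK c
  | .inr (a, true) => D.lift a
  | .inr (a, false) => (D.lift a)⁻¹

/-- Formal inverses of the generators of `G`. -/
def inv : C ⊕ A × Bool → C ⊕ A × Bool
  | .inl c => .inl (D.invK c)
  | .inr (a, b) => .inr (a, !b)

/-- A word over the generators of `K`, viewed over the generators of `G`. -/
abbrev embK (A : Type) {C : Type} (u : List C) : List (C ⊕ A × Bool) := u.map Sum.inl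

/-- The letterwise lift of a word over the generators of the quotient. -/
abbrev embQ (C : Type) {A : Type} (v : List A) : List (C ⊕ A × Bool) :=
  v.map fun a => Sum.inr (a, true)

/-- The letter of `K` underlying a generator of `G`, if there is one. -/
def letterK : C ⊕ A × Bool → Option C
  | .inl c => some c
  | .inr _ => none

/-- The letter `a` for the generator `(a, true)` of `G`. -/
def letterQ : C ⊕ A × Bool → Option A
  | .inr (a, true) => some a
  | _ => none

@[simp] theorem filterMap_letterK (u : List C) (v : List A) :
    (embK A u ++ embQ C v).filterMap letterK = u := by
  have h1 : (letterK (A := A) ∘ Sum.inl : C → Option C) = some := rfl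
  have h2 : ((letterK ∘ fun a => Sum.inr (a, true)) : A → Option C) = fun _ => none := rfl
  rw [List.filterMap_append, List.filterMap_map, List.filterMap_map, h1, h2]
  simp

@[simp] theorem filterMap_letterQ (u : List C) (v : List A) :
    (embK A u ++ embQ C v).filterMap letterQ = v := by
  have h1 : (letterQ (A := A) ∘ Sum.inl : C → Option A) = fun _ => none := rfl
  have h2 : ((letterQ (C := C) ∘ fun a => Sum.inr (a, true)) : A → Option A) = some := rfl
  rw [List.filterMap_append, List.filterMap_map, List.filterMap_map, h1, h2]
  simp

open Classical in
/-- The normal form of an element of `K` (and the empty word for other elements of `G`). -/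
noncomputable def kWord (g : G) : List C :=
  if h : ∃ u ∈ D.stK.N, ((wordVal D.πK u : K) : G) = g then h.choose else []

theorem kWord_val {g : G} (hg : g ∈ K) : ((wordVal D.πK (D.kWord g) : K) : G) = g := by
  have h : ∃ u ∈ D.stK.N, ((wordVal D.πK u : K) : G) = g := by
    obtain ⟨u, ⟨hu, h⟩, _⟩ := D.hK.nf ⟨g, hg⟩
    exact ⟨u, hu, by rw [h]⟩
  rw [kWord, dif_pos h]
  exact h.choose_spec.2

theorem kWord_one : D.kWord 1 = [] := by
  have h : ∃ u ∈ D.stK.N, ((wordVal D.πK u : K) : G) = 1 := ⟨[], D.hK.nil_mem, rfl⟩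
  rw [kWord, dif_pos h]
  exact D.hK.eq_of_val h.choose_spec.1 D.hK.nil_mem (Subtype.ext h.choose_spec.2)

/-- The set of normal forms of `G`: a normal form of `K` followed by a lifted normal form of
the quotient. -/
def nfSet : Set (List (C ⊕ A × Bool)) :=
  {y | ∃ u ∈ D.stK.N, ∃ v ∈ D.stQ.N, y = embK A u ++ embQ C v}

open Classical in
/-- The stacking function at the normal form `u v̂`, with `u` over the generators of `K` and `v`
over those of the quotient. A generator of `K` is conjugated past the last letter of `v`, or is
treated by the stacking function of `K` if `v` is empty. A lifted generator is treated by the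
stacking function of the quotient, corrected by a word over the generators of `K`; if `v` ends
in its inverse, it is replaced by the inverse of the last letter and a correction. The inverse
of a lift is replaced by the lift of the inverse and a correction, unless it cancels. -/
noncomputable def phi (u : List C) (v : List A) : C ⊕ A × Bool → List (C ⊕ A × Bool)
  | .inl c =>
    match v.getLast? with
    | none => embK A (D.stK.phi u c)
    | some a => .inr (a, false) ::
        (embK A (D.kWord (D.lift a * D.πK c * (D.lift a)⁻¹)) ++ [.inr (a, true)])
  | .inr (a, true) =>
    if v.getLast? = some (D.invQ a) then
      .inr (D.invQ a, false) :: embK A (D.kWord (D.lift (D.invQ a) * D.lift a))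
    else
      embQ C (D.stQ.phi v a) ++
        embK A (D.kWord ((wordVal D.lift (D.stQ.phi v a))⁻¹ * D.lift a))
  | .inr (a, false) =>
    if v.getLast? = some a then [.inr (a, false)]
    else .inr (D.invQ a, true) ::
      embK A (D.kWord ((D.lift (D.invQ a))⁻¹ * (D.lift a)⁻¹))

/-- The stacking structure on `G`, with a bound `n` on the lengths of stacking images. -/
noncomputable def stack (n : ℕ) : StackingData (C ⊕ A × Bool) where
  N := D.nfSet
  K := n
  phi y x := D.phi (y.filterMap letterK) (y.filterMap letterQ) x

@[simp] theorem stack_phi (n : ℕ) (u : List C) (v : List A) (x : C ⊕ A × Bool) :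
    (D.stack n).phi (embK A u ++ embQ C v) x = D.phi u v x := by
  simp only [stack, filterMap_letterK, filterMap_letterQ]

theorem mem_stack {n : ℕ} {y : List (C ⊕ A × Bool)} :
    y ∈ (D.stack n).N ↔ ∃ u ∈ D.stK.N, ∃ v ∈ D.stQ.N, y = embK A u ++ embQ C v := Iff.rfl

theorem emb_inj {u u' : List C} {v v' : List A} :
    embK A u ++ embQ C v = embK A u' ++ embQ C v' ↔ u = u' ∧ v = v' := by
  refine ⟨fun h => ⟨?_, ?_⟩, by rintro ⟨rfl, rfl⟩; rfl⟩
  · simpa only [filterMap_letterK] using congrArg (List.filterMap letterK) h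
  · simpa only [filterMap_letterQ] using congrArg (List.filterMap letterQ) h

theorem emb_mem {n : ℕ} {u : List C} {v : List A} :
    embK A u ++ embQ C v ∈ (D.stack n).N ↔ u ∈ D.stK.N ∧ v ∈ D.stQ.N := by
  rw [mem_stack]
  constructor
  · rintro ⟨u', hu, v', hv, h⟩
    obtain ⟨rfl, rfl⟩ := emb_inj.1 h
    exact ⟨hu, hv⟩
  · rintro ⟨hu, hv⟩
    exact ⟨u, hu, v, hv, rfl⟩

theorem val_embK (u : List C) : wordVal D.val (embK A u) = (wordVal D.πK u : K) := by
  induction u with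
  | nil => rfl
  | cons c u ih => simp only [List.map_cons, wordVal_cons, ih]; rfl

theorem val_embQ (v : List A) : wordVal D.val (embQ C v) = wordVal D.lift v := by
  induction v with
  | nil => rfl
  | cons c u ih => simp only [List.map_cons, wordVal_cons, ih]; rfl

@[simp] theorem mk_inl (c : C) : QuotientGroup.mk' K (D.val (.inl c)) = 1 :=
  (QuotientGroup.eq_one_iff _).2 (D.πK c).2

@[simp] theorem mk_inr_true (a : A) : QuotientGroup.mk' K (D.val (.inr (a, true))) = D.πQ a :=
  D.hlift a

@[simp] theorem mk_inr_false (a : A) :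
    QuotientGroup.mk' K (D.val (.inr (a, false))) = (D.πQ a)⁻¹ := by
  rw [← D.hlift a, ← map_inv]; rfl

@[simp] theorem mk_embK (u : List C) : QuotientGroup.mk' K (wordVal D.val (embK A u)) = 1 := by
  rw [val_embK]
  exact (QuotientGroup.eq_one_iff _).2 (wordVal D.πK u).2

theorem mk_lift (v : List A) :
    QuotientGroup.mk' K (wordVal D.lift v) = wordVal D.πQ v := by
  induction v with
  | nil => rfl
  | cons c u ih => rw [wordVal_cons, map_mul, ih, D.hlift, wordVal_cons]

@[simp] theorem mk_embQ (v : List A) :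
    QuotientGroup.mk' K (wordVal D.val (embQ C v)) = wordVal D.πQ v := by
  rw [val_embQ, mk_lift]

theorem mk_emb (u : List C) (v : List A) :
    QuotientGroup.mk' K (wordVal D.val (embK A u ++ embQ C v)) = wordVal D.πQ v := by
  rw [wordVal_append, map_mul, mk_embK, mk_embQ, one_mul]

theorem mem_iff_mk {g : G} : g ∈ K ↔ QuotientGroup.mk' K g = 1 :=
  (QuotientGroup.eq_one_iff g).symm

theorem val_kWord {g : G} (hg : g ∈ K) : wordVal D.val (embK A (D.kWord g)) = g := by
  rw [val_embK, kWord_val _ hg]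

theorem existsUnique_nf (g : G) : ∃! y, y ∈ D.nfSet ∧ wordVal D.val y = g := by
  obtain ⟨v, ⟨hv, hvg⟩, hv'⟩ := D.hQ.nf (QuotientGroup.mk' K g)
  have hk : g * (wordVal D.lift v)⁻¹ ∈ K := by
    rw [mem_iff_mk, map_mul, map_inv, mk_lift, hvg, mul_inv_cancel]
  obtain ⟨u, ⟨hu, hug⟩, hu'⟩ := D.hK.nf ⟨_, hk⟩
  refine ⟨embK A u ++ embQ C v, ⟨⟨u, hu, v, hv, rfl⟩, ?_⟩, ?_⟩
  · rw [wordVal_append, val_embK, val_embQ, hug]; simp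
  · rintro _ ⟨⟨u₁, hu₁, v₁, hv₁, rfl⟩, h⟩
    obtain rfl := hv' v₁ ⟨hv₁, by rw [← h, mk_emb]⟩
    obtain rfl := hu' u₁ ⟨hu₁, by
      rw [wordVal_append, val_embK, val_embQ] at h
      exact Subtype.ext (eq_mul_inv_of_mul_eq h)⟩
    rfl

theorem isInvGenSet : IsInvGenSet G D.val D.inv where
  ne_one := by
    rintro (c | ⟨a, b⟩) h
    · exact D.hK.gen.ne_one c (Subtype.ext h)
    · refine D.hQ.gen.ne_one a ?_
      have := congrArg (QuotientGroup.mk' K) h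
      cases b
      · simpa using (D.mk_inr_false a).symm.trans this
      · simpa using (D.mk_inr_true a).symm.trans this
  inv_invol := by
    rintro (c | ⟨a, b⟩)
    · simp [inv, D.hK.gen.inv_invol]
    · simp [inv]
  val_inv := by
    rintro (c | ⟨a, b⟩)
    · simp [inv, val, D.hK.gen.val_inv]
    · cases b <;> simp [inv, val]
  gen := by
    rw [eq_top_iff]
    intro g _
    obtain ⟨y, ⟨_, rfl⟩, _⟩ := D.existsUnique_nf g
    exact wordVal_mem _ _ _ fun x _ => Subgroup.subset_closure ⟨x, rfl⟩

theorem phi_val {u : List C} {v : List A} (hu : u ∈ D.stK.N) (hv : v ∈ D.stQ.N)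
    (x : C ⊕ A × Bool) : wordVal D.val (D.phi u v x) = D.val x := by
  rcases x with c | ⟨a, _ | _⟩
  · rcases h : v.getLast? with _ | a
    · simp only [phi, h, val_embK, (D.hK.F1 u hu c).1]; rfl
    · have hk : D.lift a * D.πK c * (D.lift a)⁻¹ ∈ K :=
        Subgroup.Normal.conj_mem inferInstance _ (D.πK c).2 _
      simp only [phi, h, wordVal_cons, wordVal_append, D.val_kWord hk, wordVal_nil]
      simp [val, mul_assoc]
  · have hk : (D.lift (D.invQ a))⁻¹ * (D.lift a)⁻¹ ∈ K := by
      rw [mem_iff_mk, map_mul, map_inv, map_inv, D.hlift, D.hlift, D.hQ.gen.val_inv]; simp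
    by_cases h : v.getLast? = some a
    · simp [phi, h]
    · simp only [phi, h, if_false, wordVal_cons, D.val_kWord hk]
      simp [val]
  · by_cases h : v.getLast? = some (D.invQ a)
    · have hk : D.lift (D.invQ a) * D.lift a ∈ K := by
        rw [mem_iff_mk, map_mul, D.hlift, D.hlift, D.hQ.gen.val_inv]; simp
      simp only [phi, h, if_true, wordVal_cons, D.val_kWord hk]
      simp [val]
    · have hk : (wordVal D.lift (D.stQ.phi v a))⁻¹ * D.lift a ∈ K := by
        rw [mem_iff_mk, map_mul, map_inv, mk_lift, (D.hQ.F1 v hv a).1, D.hlift]; simp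
      simp only [phi, h, if_false, wordVal_append, D.val_kWord hk, val_embQ]
      simp [val]

/-- The stacking function takes finitely many values on pairs of a normal form and a letter. -/
theorem finite_phi [Finite C] [Finite A] : ∃ W : Set (List (C ⊕ A × Bool)), W.Finite ∧
    ∀ u ∈ D.stK.N, ∀ v ∈ D.stQ.N, ∀ x, D.phi u v x ∈ W := by
  refine ⟨embK A '' {w | w.length ≤ D.stK.K} ∪
    Set.range (fun p : A × C => .inr (p.1, false) ::
        (embK A (D.kWord (D.lift p.1 * D.πK p.2 * (D.lift p.1)⁻¹)) ++ [.inr (p.1, true)])) ∪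
    Set.range (fun a : A =>
      .inr (D.invQ a, false) :: embK A (D.kWord (D.lift (D.invQ a) * D.lift a))) ∪
    (⋃ a : A, (fun w => embQ C w ++ embK A (D.kWord ((wordVal D.lift w)⁻¹ * D.lift a))) ''
      {w | w.length ≤ D.stQ.K}) ∪
    Set.range (fun a : A => [.inr (a, false)]) ∪
    Set.range (fun a : A => .inr (D.invQ a, true) ::
      embK A (D.kWord ((D.lift (D.invQ a))⁻¹ * (D.lift a)⁻¹))), ?_, ?_⟩
  · refine (((((((List.finite_length_le C _).image _).union (Set.finite_range _)).union
      (Set.finite_range _)).union (Set.finite_iUnion fun a =>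
        (List.finite_length_le A _).image _)).union (Set.finite_range _)).union
      (Set.finite_range _))
  · intro u hu v hv x
    rcases x with c | ⟨a, _ | _⟩
    · rcases h : v.getLast? with _ | a
      · simp only [phi, h]
        exact Or.inl <| Or.inl <| Or.inl <| Or.inl <| Or.inl ⟨_, (D.hK.F1 u hu c).2, rfl⟩
      · simp only [phi, h]
        exact Or.inl <| Or.inl <| Or.inl <| Or.inl <| Or.inr ⟨(a, c), rfl⟩
    · by_cases h : v.getLast? = some a
      · simp only [phi, h, if_true]
        exact Or.inl <| Or.inr ⟨a, rfl⟩
      · simp only [phi, h, if_false]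
        exact Or.inr ⟨a, rfl⟩
    · by_cases h : v.getLast? = some (D.invQ a)
      · simp only [phi, h, if_true]
        exact Or.inl <| Or.inl <| Or.inl <| Or.inr ⟨a, rfl⟩
      · simp only [phi, h, if_false]
        exact Or.inl <| Or.inl <| Or.inr <| Set.mem_iUnion.2
          ⟨a, ⟨_, (D.hQ.F1 v hv a).2, rfl⟩⟩

theorem append_inl_mem_iff {n : ℕ} {u : List C} {v : List A} {c : C} :
    (embK A u ++ embQ C v) ++ [.inl c] ∈ (D.stack n).N ↔ v = [] ∧ u ++ [c] ∈ D.stK.N := by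
  constructor
  · rintro ⟨u', hu, v', hv, h⟩
    have hv' : v = v' := by
      have := congrArg (List.filterMap letterQ) h
      rw [List.filterMap_append, filterMap_letterQ, filterMap_letterQ] at this
      have h0 : List.filterMap letterQ [(Sum.inl c : C ⊕ A × Bool)] = [] := rfl
      simpa [h0] using this
    have hu' : u ++ [c] = u' := by
      have := congrArg (List.filterMap letterK) h
      rw [List.filterMap_append, filterMap_letterK, filterMap_letterK] at this
      have h0 : List.filterMap letterK [(Sum.inl c : C ⊕ A × Bool)] = [c] := rfl
      simpa [h0] using this
    subst hv' hu'
    refine ⟨?_, hu⟩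
    -- otherwise the last letters of the two expressions for the word are different
    by_contra hne
    obtain ⟨v', a, rfl⟩ := (List.eq_nil_or_concat v).resolve_left hne
    have h2 : embK A (u ++ [c]) ++ embQ C (v'.concat a) =
        (embK A (u ++ [c]) ++ embQ C v') ++ [.inr (a, true)] := by simp
    rw [h2] at h
    have := congrArg List.getLast? h
    simp only [List.getLast?_append, List.getLast?_singleton, Option.some_or] at this
    simp at this
  · rintro ⟨rfl, h⟩
    exact ⟨u ++ [c], h, [], D.hQ.nil_mem, by simp⟩

theorem append_inr_mem {n : ℕ} {u : List C} {v : List A} {a : A} (hu : u ∈ D.stK.N)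
    (h : v ++ [a] ∈ D.stQ.N) : (embK A u ++ embQ C v) ++ [.inr (a, true)] ∈ (D.stack n).N :=
  ⟨u, hu, v ++ [a], h, by simp⟩

theorem append_inr_mem_iff {n : ℕ} {u : List C} {v : List A} {a : A} {b : Bool} :
    (embK A u ++ embQ C v) ++ [.inr (a, b)] ∈ (D.stack n).N ↔
      b = true ∧ u ∈ D.stK.N ∧ v ++ [a] ∈ D.stQ.N := by
  constructor
  · intro h
    have hb : b = true := by
      obtain ⟨u', hu, v', hv, h⟩ := h
      have := h ▸ (by simp : (Sum.inr (a, b) : C ⊕ A × Bool) ∈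
        (embK A u ++ embQ C v) ++ [Sum.inr (a, b)])
      simp only [List.mem_append, List.mem_map, reduceCtorEq, and_false, exists_false,
        Sum.inr.injEq, Prod.mk.injEq, false_or] at this
      obtain ⟨_, _, _, rfl⟩ := this
      rfl
    subst hb
    refine ⟨rfl, ?_⟩
    have : (embK A u ++ embQ C v) ++ [.inr (a, true)] = embK A u ++ embQ C (v ++ [a]) := by simp
    rw [this, emb_mem] at h
    exact h
  · rintro ⟨rfl, hu, h⟩
    exact D.append_inr_mem hu h

theorem endsWith_inl {u : List C} {v : List A} {c : C} :
    (∃ y', embK A u ++ embQ C v = y' ++ [.inl c]) ↔ v = [] ∧ u.getLast? = some c := by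
  rw [← List.getLast?_eq_some_iff]
  rcases List.eq_nil_or_concat v with rfl | ⟨v', a, rfl⟩
  · simp [List.getLast?_map]
  · simp

theorem endsWith_inr {u : List C} {v : List A} {a : A} {b : Bool} :
    (∃ y', embK A u ++ embQ C v = y' ++ [.inr (a, b)]) ↔ b = true ∧ v.getLast? = some a := by
  rw [← List.getLast?_eq_some_iff]
  rcases List.eq_nil_or_concat v with rfl | ⟨v', a', rfl⟩
  · simp [List.getLast?_map]
  · simp [and_comm, eq_comm]

/-- Concatenations of words of `U` with lifts of words of `V` inherit prefix-closedness. -/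
theorem prefixClosed_emb {U : Set (List C)} {V : Set (List A)} (hU : PrefixClosed U)
    (hV : PrefixClosed V) (hnil : [] ∈ V) :
    PrefixClosed {y | ∃ u ∈ U, ∃ v ∈ V, y = embK A u ++ embQ C v} := by
  rintro _ ⟨u, hu, v, hv, rfl⟩ p hp
  rcases prefix_append_cases hp with h | ⟨q, h, rfl⟩
  · obtain ⟨q, hq, rfl⟩ := prefix_map_cases h
    exact ⟨q, hU _ hu _ hq, [], hnil, by simp⟩
  · obtain ⟨r, hr, rfl⟩ := prefix_map_cases h
    exact ⟨u, hu, r, hV _ hv _ hr, rfl⟩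

/-! ### Termination -/

theorem phi_eq_self {n : ℕ} {u : List C} {v : List A} (hu : u ∈ D.stK.N) (hv : v ∈ D.stQ.N)
    (x : C ⊕ A × Bool) (h : (embK A u ++ embQ C v) ++ [x] ∈ (D.stack n).N ∨
      ∃ y', embK A u ++ embQ C v = y' ++ [D.inv x]) : D.phi u v x = [x] := by
  rcases x with c | ⟨a, _ | _⟩
  · have h' : v = [] ∧ (u ++ [c] ∈ D.stK.N ∨ ∃ y', u = y' ++ [D.invK c]) := by
      rcases h with h | h
      · rw [append_inl_mem_iff] at h
        exact ⟨h.1, Or.inl h.2⟩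
      · rw [inv, endsWith_inl, List.getLast?_eq_some_iff] at h
        exact ⟨h.1, Or.inr h.2⟩
    obtain ⟨rfl, h'⟩ := h'
    simp [phi, D.hK.F2 u hu c h']
  · rcases h with h | h
    · exact absurd (D.append_inr_mem_iff.1 h).1 (by simp)
    · rw [inv, endsWith_inr] at h
      simp [phi, h.2]
  · rcases h with h | h
    · rw [append_inr_mem_iff] at h
      have h1 : v.getLast? ≠ some (D.invQ a) := fun h' => D.hQ.append_notMem h' h.2.2
      have h2 := D.hQ.F2 v hv a (Or.inl h.2.2)
      simp [phi, h1, h2, kWord_one]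
    · simp [inv, endsWith_inr] at h

/-- The relation `Step` of the stacking structure on `G`, with the normal forms decomposed. -/
theorem step_cases {n : ℕ} {u : List C} {v : List A} {x : C ⊕ A × Bool}
    {p : List (C ⊕ A × Bool) × (C ⊕ A × Bool)}
    (h : (D.stack n).Step D.val D.inv p (embK A u ++ embQ C v, x)) :
    ∃ u' ∈ D.stK.N, ∃ v' ∈ D.stQ.N, ∃ x', p = (embK A u' ++ embQ C v', x') ∧
      ∃ s s', D.phi u v x = s ++ x' :: s' ∧
        wordVal D.val (embK A u' ++ embQ C v') = wordVal D.val (embK A u ++ embQ C v ++ s) ∧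
        wordVal D.πQ v' = wordVal D.πQ v * QuotientGroup.mk' K (wordVal D.val s) := by
  obtain ⟨y, x'⟩ := p
  obtain ⟨_, ⟨⟨u', hu', v', hv', rfl⟩, _⟩, s, s', h1, h2⟩ := h
  rw [stack_phi] at h1
  refine ⟨u', hu', v', hv', x', rfl, s, s', h1, h2, ?_⟩
  have := congrArg (QuotientGroup.mk' K) h2
  rwa [wordVal_append D.val (embK A u ++ embQ C v) s, map_mul, mk_emb, mk_emb] at this

theorem acc_inl_nil {n : ℕ} {p : List C × C} (h : Acc (D.stK.Step D.πK D.invK) p) :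
    Acc ((D.stack n).Step D.val D.inv) (embK A p.1 ++ embQ C [], .inl p.2) := by
  induction h with
  | intro p _ ih =>
    refine Acc.intro _ fun p' hp' => ?_
    obtain ⟨u', hu', v', hv', x', rfl, s, s', hphi, hval, hQ⟩ := D.step_cases hp'
    obtain ⟨⟨hp1, hp2, hp3⟩, ⟨hr1, hr2, hr3⟩, _⟩ := hp'
    simp only [phi, List.getLast?_nil] at hphi
    obtain ⟨t, c, t', hphi', rfl, rfl⟩ := map_eq_append_cons hphi
    obtain rfl : v' = [] := D.hQ.eq_of_val hv' D.hQ.nil_mem (by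
      simpa only [wordVal_nil, mk_embK, mul_one] using hQ)
    refine ih (u', c) ⟨⟨(D.emb_mem.1 hp1).1, fun h => hp2 ?_, fun h => hp3 ?_⟩,
      ⟨hu', fun h => hr2 ?_, fun h => hr3 ?_⟩, t, t', hphi', ?_⟩
    · exact D.append_inl_mem_iff.2 ⟨rfl, h⟩
    · exact endsWith_inl.2 ⟨rfl, List.getLast?_eq_some_iff.2 h⟩
    · exact D.append_inl_mem_iff.2 ⟨rfl, h⟩
    · exact endsWith_inl.2 ⟨rfl, List.getLast?_eq_some_iff.2 h⟩
    · apply Subtype.ext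
      rw [wordVal_append, Subgroup.coe_mul]
      simpa [wordVal_append, val_embK] using hval

/-- Rewriting a generator of `K` terminates: the part of the normal form over the generators of
the quotient becomes shorter, until the stacking function of `K` takes over. -/
theorem acc_inl {n : ℕ} (v : List A) : ∀ u ∈ D.stK.N, v ∈ D.stQ.N → ∀ c : C,
    Acc ((D.stack n).Step D.val D.inv) (embK A u ++ embQ C v, .inl c) := by
  induction v using List.reverseRecOn with
  | nil =>
    intro u _ _ c
    exact D.acc_inl_nil (p := (u, c)) ((wellFounded_step_iff.2 D.hK.F3).apply _)
  | append_singleton v a ih =>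
    intro u hu hva c
    have hv : v ∈ D.stQ.N := D.hQ.prefixClosed _ hva _ ⟨[a], rfl⟩
    refine Acc.intro _ fun p' hp' => ?_
    obtain ⟨u', hu', v', hv', x', rfl, s, s', hphi, hval, hQ⟩ := D.step_cases hp'
    obtain ⟨-, ⟨hr1, hr2, hr3⟩, _⟩ := hp'
    simp only [phi, List.getLast?_append, List.getLast?_singleton, Option.some_or] at hphi
    rcases s with _ | ⟨z, s⟩
    · -- the first letter cancels the last letter of the normal form
      simp only [List.nil_append, List.cons.injEq] at hphi
      obtain ⟨rfl, _⟩ := hphi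
      obtain rfl : v' = v ++ [a] := D.hQ.eq_of_val hv' hva (by simpa using hQ)
      exact absurd (endsWith_inr.2 ⟨rfl, by simp⟩) hr3
    · simp only [List.cons_append, List.cons.injEq] at hphi
      obtain ⟨rfl, hphi⟩ := hphi
      rcases append_eq_append_cons hphi with ⟨t, ht⟩ | ⟨t, rfl, ht⟩
      · obtain ⟨t, c', t', _, rfl, rfl⟩ := map_eq_append_cons ht
        obtain rfl : v' = v := D.hQ.eq_of_val hv' hv (by
          simpa only [wordVal_append, wordVal_cons, wordVal_nil, map_mul, mk_inr_false, mk_embK,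
            mul_one, mul_inv_cancel_right] using hQ)
        exact ih u' hu' hv' c'
      · -- the final letter restores the normal form
        obtain ⟨rfl, rfl, -⟩ : t = [] ∧ x' = .inr (a, true) ∧ s' = [] := by
          cases t <;> simp at ht
          exact ⟨rfl, ht.1.symm, ht.2⟩
        obtain rfl : v' = v := D.hQ.eq_of_val hv' hv (by
          simpa only [List.append_nil, wordVal_append, wordVal_cons, wordVal_nil, map_mul,
            mk_inr_false, mk_embK, mul_one, mul_inv_cancel_right] using hQ)
        exact absurd (D.append_inr_mem hu' hva) hr2

/-- The case of a lifted generator `a` whose inverse in the quotient is the last letter of the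
normal form. In the quotient this pair is not recursive, but in `G` it is, since the lifts of
`a` and `a⁻¹` need not be inverse to each other. -/
theorem acc_inr_true_of_last {n : ℕ} {u : List C} {v : List A} {a : A} (hv : v ∈ D.stQ.N)
    (h : v.getLast? = some (D.invQ a)) :
    Acc ((D.stack n).Step D.val D.inv) (embK A u ++ embQ C v, .inr (a, true)) := by
  refine Acc.intro _ fun p' hp' => ?_
  obtain ⟨u', hu', v', hv', x', rfl, s, s', hphi, hval, hQ⟩ := D.step_cases hp'
  obtain ⟨-, ⟨hr1, hr2, hr3⟩, _⟩ := hp'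
  simp only [phi, h, if_true] at hphi
  rcases s with _ | ⟨z, s⟩
  · -- the first letter cancels the last letter of the normal form
    simp only [List.nil_append, List.cons.injEq] at hphi
    obtain ⟨rfl, _⟩ := hphi
    obtain rfl : v' = v := D.hQ.eq_of_val hv' hv (by simpa using hQ)
    exact absurd (endsWith_inr.2 ⟨rfl, h⟩) hr3
  · simp only [List.cons_append, List.cons.injEq] at hphi
    obtain ⟨t, c', t', _, rfl, rfl⟩ := map_eq_append_cons hphi.2
    exact D.acc_inl v' u' hu' hv' c'

/-- Rewriting a lifted generator terminates: it runs in parallel to rewriting in the quotient,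
up to generators of `K` and cancellations. -/
theorem acc_inr_true {n : ℕ} {p : List A × A} (h : Acc (D.stQ.Step D.πQ D.invQ) p) :
    ∀ u, p.1 ∈ D.stQ.N →
      Acc ((D.stack n).Step D.val D.inv) (embK A u ++ embQ C p.1, .inr (p.2, true)) := by
  induction h with
  | intro p _ ih =>
    intro u hv
    by_cases hlast : p.1.getLast? = some (D.invQ p.2)
    · exact D.acc_inr_true_of_last hv hlast
    refine Acc.intro _ fun p' hp' => ?_
    obtain ⟨u', hu', v', hv', x', rfl, s, s', hphi, hval, hQ⟩ := D.step_cases hp'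
    obtain ⟨⟨hp1, hp2, hp3⟩, ⟨hr1, hr2, hr3⟩, _⟩ := hp'
    simp only [phi, hlast, if_false] at hphi
    rcases append_eq_append_cons hphi with ⟨t, ht⟩ | ⟨t, rfl, ht⟩
    · obtain ⟨t, a, t', ht', rfl, rfl⟩ := map_eq_append_cons ht
      by_cases hlast' : v'.getLast? = some (D.invQ a)
      · exact D.acc_inr_true_of_last hv' hlast'
      · refine ih (v', a) ⟨⟨hv, fun h => hp2 ?_, ?_⟩, ⟨hv', fun h => hr2 ?_, ?_⟩,
          t, t', ht', ?_⟩ u' hv'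
        · exact D.append_inr_mem (D.emb_mem.1 hp1).1 h
        · rwa [← List.getLast?_eq_some_iff]
        · exact D.append_inr_mem hu' h
        · rwa [← List.getLast?_eq_some_iff]
        · rw [wordVal_append, hQ, mk_embQ]
    · obtain ⟨t, c', t', _, rfl, rfl⟩ := map_eq_append_cons ht
      exact D.acc_inl v' u' hu' hv' c'

theorem acc_inr_true' {n : ℕ} (u : List C) {v : List A} (hv : v ∈ D.stQ.N) (a : A) :
    Acc ((D.stack n).Step D.val D.inv) (embK A u ++ embQ C v, .inr (a, true)) :=
  D.acc_inr_true (p := (v, a)) ((wellFounded_step_iff.2 D.hQ.F3).apply _) u hv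

/-- Rewriting the inverse of a lift terminates: either it cancels, or it becomes a lifted
generator followed by generators of `K`. -/
theorem acc_inr_false {n : ℕ} {u : List C} {v : List A} (a : A) :
    Acc ((D.stack n).Step D.val D.inv) (embK A u ++ embQ C v, .inr (a, false)) := by
  refine Acc.intro _ fun p' hp' => ?_
  obtain ⟨u', hu', v', hv', x', rfl, s, s', hphi, hval, hQ⟩ := D.step_cases hp'
  obtain ⟨⟨hp1, hp2, hp3⟩, ⟨hr1, hr2, hr3⟩, _⟩ := hp'
  have hlast : v.getLast? ≠ some a := fun h => hp3 (endsWith_inr.2 ⟨rfl, h⟩)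
  simp only [phi, hlast, if_false] at hphi
  rcases s with _ | ⟨z, s⟩
  · simp only [List.nil_append, List.cons.injEq] at hphi
    obtain ⟨rfl, _⟩ := hphi
    exact D.acc_inr_true' u' hv' _
  · simp only [List.cons_append, List.cons.injEq] at hphi
    obtain ⟨t, c', t', _, rfl, rfl⟩ := map_eq_append_cons hphi.2
    exact D.acc_inl v' u' hu' hv' c'

theorem wellFounded_step (n : ℕ) : WellFounded ((D.stack n).Step D.val D.inv) := by
  refine ⟨fun p => ?_⟩
  by_cases hp : p.1 ∈ (D.stack n).N
  · obtain ⟨y, x⟩ := p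
    obtain ⟨u, hu, v, hv, rfl⟩ := hp
    rcases x with c | ⟨a, _ | _⟩
    · exact D.acc_inl v u hu hv c
    · exact D.acc_inr_false a
    · exact D.acc_inr_true' u hv a
  · exact Acc.intro _ fun p' h => absurd h.1.1 hp

theorem isStacking (n : ℕ) (hn : ∀ u ∈ D.stK.N, ∀ v ∈ D.stQ.N, ∀ x, (D.phi u v x).length ≤ n) :
    IsStacking G D.val D.inv (D.stack n) where
  gen := D.isInvGenSet
  nf := D.existsUnique_nf
  prefixClosed := prefixClosed_emb D.hK.prefixClosed D.hQ.prefixClosed D.hQ.nil_mem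
  F1 := by
    rintro _ ⟨u, hu, v, hv, rfl⟩ x
    rw [stack_phi]
    exact ⟨D.phi_val hu hv x, hn u hu v hv x⟩
  F2 := by
    rintro _ ⟨u, hu, v, hv, rfl⟩ x h
    rw [stack_phi]
    exact D.phi_eq_self hu hv x h
  F3 := wellFounded_step_iff.1 (D.wellFounded_step n)

/-! ### Regularity -/

/-- The automaton checking that a word consists of generators of `K` followed by lifted
generators of the quotient; the state records whether the second part has begun, and `none` is
the failure state. -/
def shapeStep : Option Bool → C ⊕ A × Bool → Option Bool
  | some false, .inl _ => some false
  | some _, .inr (_, true) => some true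
  | _, _ => none

theorem regular_shape :
    IsRegularLang {y : List (C ⊕ A × Bool) | ∃ u v, y = embK A u ++ embQ C v} := by
  refine regular_iff.2 ⟨Option Bool, inferInstance, shapeStep, some false, {none}ᶜ, fun w => ?_⟩
  have h0 : ∀ w : List (C ⊕ A × Bool), w.foldl shapeStep none = none := by
    intro w
    induction w with
    | nil => rfl
    | cons x w ih => simpa [shapeStep] using ih
  have h1 : ∀ w : List (C ⊕ A × Bool),
      w.foldl shapeStep (some true) ≠ none ↔ ∃ v, w = embQ C v := by
    intro w
    induction w with
    | nil => simp
    | cons x w ih =>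
      rcases x with c | ⟨a, _ | _⟩
      · simpa [shapeStep, h0] using fun v h => by cases v <;> simp at h
      · simpa [shapeStep, h0] using fun v h => by cases v <;> simp at h
      · simp only [List.foldl_cons, shapeStep]
        rw [ih]
        constructor
        · rintro ⟨v, rfl⟩
          exact ⟨a :: v, rfl⟩
        · rintro ⟨_ | ⟨b, v⟩, h⟩
          · simp at h
          · exact ⟨v, by simp at h; exact h.2⟩
  have h2 : ∀ w : List (C ⊕ A × Bool),
      w.foldl shapeStep (some false) ≠ none ↔ ∃ u v, w = embK A u ++ embQ C v := by
    intro w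
    induction w with
    | nil => simp
    | cons x w ih =>
      rcases x with c | ⟨a, b⟩
      · simp only [List.foldl_cons, shapeStep]
        rw [ih]
        constructor
        · rintro ⟨u, v, rfl⟩
          exact ⟨c :: u, v, rfl⟩
        · rintro ⟨_ | ⟨c', u⟩, v, h⟩
          · cases v <;> simp at h
          · exact ⟨u, v, by simp at h; simpa using h.2⟩
      · have : (Sum.inr (a, b) :: w).foldl (shapeStep (C := C)) (some false) =
            (Sum.inr (a, b) :: w).foldl shapeStep (some true) := by
          cases b <;> rfl
        rw [this, h1]
        constructor
        · rintro ⟨v, h⟩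
          exact ⟨[], v, h⟩
        · rintro ⟨_ | ⟨c', u⟩, v, h⟩
          · exact ⟨v, h⟩
          · simp at h
  exact (h2 w).symm

theorem regular_emb {U : Set (List C)} {V : Set (List A)} (hU : IsRegularLang U)
    (hV : IsRegularLang V) :
    IsRegularLang {y : List (C ⊕ A × Bool) | ∃ u ∈ U, ∃ v ∈ V, y = embK A u ++ embQ C v} := by
  convert (regular_shape (C := C) (A := A)).inter
    ((hU.preimage_filterMap letterK).inter (hV.preimage_filterMap letterQ)) using 1
  ext y
  constructor
  · rintro ⟨u, hu, v, hv, rfl⟩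
    exact ⟨⟨u, v, rfl⟩, by simpa only [Set.mem_ofPred_eq, filterMap_letterK] using hu,
      by simpa only [Set.mem_ofPred_eq, filterMap_letterQ] using hv⟩
  · rintro ⟨⟨u, v, rfl⟩, hu, hv⟩
    simp only [Set.mem_ofPred_eq, filterMap_letterK, filterMap_letterQ] at hu hv
    exact ⟨u, hu, v, hv, rfl⟩

/-- The fibres of the stacking function of `G` are regular: its value depends only on the last
letter of the part over the generators of the quotient and on the values of the given stacking
functions. -/
theorem regular_phi [Finite C] [Finite A] (hK : D.stK.IsAuto) (hQ : D.stQ.IsAuto) (n : ℕ)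
    (x : C ⊕ A × Bool) (w : List (C ⊕ A × Bool)) :
    IsRegularLang {y | y ∈ (D.stack n).N ∧ (D.stack n).phi y x = w} := by
  rcases x with c | ⟨a, _ | _⟩
  · have h1 := regular_emb (regular_fiber_set D.hK hK c {z | embK A z = w})
      (hQ.1.inter (IsRegularLang.getLast {none}))
    have h2 := regular_emb hK.1 (hQ.1.inter (IsRegularLang.getLast {o : Option A | ∃ a,
      o = some a ∧ .inr (a, false) :: (embK A (D.kWord (D.lift a * D.πK c * (D.lift a)⁻¹)) ++
        [.inr (a, true)]) = w}))
    convert h1.union h2 using 1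
    ext y
    constructor
    · rintro ⟨⟨u, hu, v, hv, rfl⟩, h⟩
      rw [stack_phi] at h
      rcases hl : v.getLast? with _ | a
      · simp only [phi, hl] at h
        exact Or.inl ⟨u, ⟨hu, h⟩, v, ⟨hv, hl⟩, rfl⟩
      · simp only [phi, hl] at h
        exact Or.inr ⟨u, hu, v, ⟨hv, a, hl, h⟩, rfl⟩
    · rintro (⟨u, ⟨hu, h⟩, v, ⟨hv, hl⟩, rfl⟩ | ⟨u, hu, v, ⟨hv, a, hl, h⟩, rfl⟩)
      · refine ⟨⟨u, hu, v, hv, rfl⟩, ?_⟩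
        have hl : v.getLast? = none := hl
        rw [stack_phi]
        simpa only [phi, hl, Set.mem_ofPred_eq] using h
      · refine ⟨⟨u, hu, v, hv, rfl⟩, ?_⟩
        rw [stack_phi]
        simpa only [phi, hl, Set.mem_ofPred_eq] using h
  · convert regular_emb hK.1 (hQ.1.inter (IsRegularLang.getLast {o : Option A |
      (o = some a → [.inr (a, false)] = w) ∧ (o ≠ some a → .inr (D.invQ a, true) ::
        embK A (D.kWord ((D.lift (D.invQ a))⁻¹ * (D.lift a)⁻¹)) = w)})) using 1
    ext y
    constructor
    · rintro ⟨⟨u, hu, v, hv, rfl⟩, h⟩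
      rw [stack_phi] at h
      refine ⟨u, hu, v, ⟨hv, fun hl => ?_, fun hl => ?_⟩, rfl⟩
      · simpa only [phi, hl, if_true] using h
      · simpa only [phi, hl, if_false] using h
    · rintro ⟨u, hu, v, ⟨hv, h1, h2⟩, rfl⟩
      refine ⟨⟨u, hu, v, hv, rfl⟩, ?_⟩
      rw [stack_phi]
      by_cases hl : v.getLast? = some a
      · simpa only [phi, hl, if_true] using h1 hl
      · simpa only [phi, hl, if_false] using h2 hl
  · have h1 := regular_emb hK.1 (hQ.1.inter (IsRegularLang.getLast {o : Option A |
      o = some (D.invQ a) ∧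
        .inr (D.invQ a, false) :: embK A (D.kWord (D.lift (D.invQ a) * D.lift a)) = w}))
    have h2 := regular_emb hK.1 ((regular_fiber_set D.hQ hQ a
      {z | embQ C z ++ embK A (D.kWord ((wordVal D.lift z)⁻¹ * D.lift a)) = w}).inter
      (IsRegularLang.getLast {o : Option A | o ≠ some (D.invQ a)}))
    convert h1.union h2 using 1
    ext y
    constructor
    · rintro ⟨⟨u, hu, v, hv, rfl⟩, h⟩
      rw [stack_phi] at h
      by_cases hl : v.getLast? = some (D.invQ a)
      · simp only [phi, hl, if_true] at h
        exact Or.inl ⟨u, hu, v, ⟨hv, hl, h⟩, rfl⟩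
      · simp only [phi, hl, if_false] at h
        exact Or.inr ⟨u, hu, v, ⟨⟨hv, h⟩, hl⟩, rfl⟩
    · rintro (⟨u, hu, v, ⟨hv, hl, h⟩, rfl⟩ | ⟨u, hu, v, ⟨⟨hv, h⟩, hl⟩, rfl⟩)
      · refine ⟨⟨u, hu, v, hv, rfl⟩, ?_⟩
        rw [stack_phi]
        simpa only [phi, hl, if_true] using h
      · refine ⟨⟨u, hu, v, hv, rfl⟩, ?_⟩
        have hl : ¬ v.getLast? = some (D.invQ a) := hl
        rw [stack_phi]
        simpa only [phi, hl, if_false, Set.mem_ofPred_eq] using h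

theorem isAuto [Finite C] [Finite A] (hK : D.stK.IsAuto) (hQ : D.stQ.IsAuto) (n : ℕ) :
    (D.stack n).IsAuto := by
  obtain ⟨W, hW, hphi⟩ := D.finite_phi
  refine isAuto_of_regular_fiber (regular_emb hK.1 hQ.1) W hW ?_ (D.regular_phi hK hQ n)
  rintro _ ⟨u, hu, v, hv, rfl⟩ x
  rw [stack_phi]
  exact hphi u hu v hv x

/-! ### The subgroup -/

/-- If the stacking structure of the quotient respects the image of a subgroup `H` containing
`K`, then the stacking structure on `G` respects `H`. The generators for `H` are those of `K`
and the lifts, and their inverses, of the generators for the image of `H`. -/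
theorem respects (n : ℕ) (H : Subgroup G) (hKH : K ≤ H)
    (hresp : RespectsSubgroup D.πQ D.invQ D.stQ (H.map (QuotientGroup.mk' K))) :
    RespectsSubgroup D.val D.inv (D.stack n) H := by
  obtain ⟨B, hBinv, hBP, hBgen, NP, NT, hNPB, hNPp, hNP, hNTp, hNT, hN, hclos, htrans⟩ := hresp
  have hmem : ∀ g : G, g ∈ H ↔ QuotientGroup.mk' K g ∈ H.map (QuotientGroup.mk' K) := by
    intro g
    constructor
    · exact fun h => Subgroup.mem_map_of_mem _ h
    · rintro ⟨h, hh, he⟩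
      have : h⁻¹ * g ∈ K := QuotientGroup.eq.1 he
      simpa using H.mul_mem hh (hKH this)
  have hNPval : ∀ p ∈ NP, wordVal D.πQ p ∈ H.map (QuotientGroup.mk' K) := fun p hp =>
    wordVal_mem _ _ _ fun b hb => hBP b (hNPB p hp b hb)
  have hNPnil : [] ∈ NP := by
    obtain ⟨w, ⟨hw, _⟩, _⟩ := hNP 1 (Subgroup.one_mem _)
    exact hNPp w hw _ ⟨w, rfl⟩
  have hNTnil : [] ∈ NT := by
    obtain ⟨w, ⟨hw, _⟩, _⟩ := hNT 1
    exact hNTp w hw _ ⟨w, rfl⟩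
  have hNQ : ∀ p ∈ NP, ∀ t ∈ NT, p ++ t ∈ D.stQ.N := fun p hp t ht => by
    rw [hN]; exact ⟨p, hp, t, ht, rfl⟩
  -- the coset of a normal form determines its factor in the transversal
  have htr : ∀ p ∈ NP, ∀ t ∈ NT, ∀ p' ∈ NP, ∀ t' ∈ NT,
      wordVal D.πQ (p' ++ t') * (wordVal D.πQ (p ++ t))⁻¹ ∈ H.map (QuotientGroup.mk' K) →
      t' = t := by
    intro p hp t ht p' hp' t' ht' h
    refine (hNT (wordVal D.πQ t)).unique ⟨ht', ?_⟩ ⟨ht, by simp⟩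
    have := Subgroup.mul_mem _ (Subgroup.mul_mem _ (Subgroup.inv_mem _ (hNPval p' hp')) h)
      (hNPval p hp)
    simpa [mul_assoc] using this
  have htriv : ∀ p ∈ NP, ∀ t ∈ NT, wordVal D.πQ (p ++ t) ∈ H.map (QuotientGroup.mk' K) →
      t = [] := fun p hp t ht h =>
    htr [] hNPnil [] hNTnil p hp t ht (by simpa using h)
  let BG : Set (C ⊕ A × Bool) := {x | ∀ p, x = .inr p → p.1 ∈ B}
  have hBGl : ∀ c, .inl c ∈ BG := fun c p h => by simp at h
  have hBGr : ∀ a b, .inr (a, b) ∈ BG ↔ a ∈ B := fun a b =>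
    ⟨fun h => h _ rfl, fun h p hp => by simp at hp; subst hp; exact h⟩
  have hBGK : ∀ u : List C, ∀ x ∈ embK A u, x ∈ BG := by
    intro u x hx
    obtain ⟨c, _, rfl⟩ := List.mem_map.1 hx
    exact hBGl c
  have hBGQ : ∀ v : List A, (∀ a ∈ v, a ∈ B) → ∀ x ∈ embQ C v, x ∈ BG := by
    intro v hv x hx
    obtain ⟨a, ha, rfl⟩ := List.mem_map.1 hx
    exact (hBGr _ _).2 (hv a ha)
  have hBGH : ∀ b ∈ BG, D.val b ∈ H := by
    rintro (c | ⟨a, b⟩) hx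
    · exact hKH (D.πK c).2
    · have := hBP a ((hBGr a b).1 hx)
      rw [hmem]
      cases b
      · rw [mk_inr_false]; exact Subgroup.inv_mem _ this
      · rw [mk_inr_true]; exact this
  let NH : Set (List (C ⊕ A × Bool)) := {y | ∃ u ∈ D.stK.N, ∃ v ∈ NP, y = embK A u ++ embQ C v}
  have hNHB : ∀ w ∈ NH, ∀ b ∈ w, b ∈ BG := by
    rintro _ ⟨u, hu, v, hv, rfl⟩ b hb
    rcases List.mem_append.1 hb with hb | hb
    · exact hBGK u b hb
    · exact hBGQ v (hNPB v hv) b hb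
  have hNH : ∀ h : G, h ∈ H → ∃! w, w ∈ NH ∧ wordVal D.val w = h := by
    intro h hh
    obtain ⟨_, ⟨⟨u, hu, v, hv, rfl⟩, hval⟩, huniq⟩ := D.existsUnique_nf h
    rw [hN] at hv
    obtain ⟨p, hp, t, ht, rfl⟩ := hv
    obtain rfl : t = [] := htriv p hp t ht (by rw [← mk_emb (u := u), hval, ← hmem]; exact hh)
    refine ⟨_, ⟨⟨u, hu, p, hp, by rw [List.append_nil]⟩, hval⟩, ?_⟩
    rintro _ ⟨⟨u', hu', p', hp', rfl⟩, h'⟩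
    exact huniq _ ⟨⟨u', hu', p', by simpa using hNQ p' hp' [] hNTnil, rfl⟩, h'⟩
  refine ⟨BG, ?_, hBGH, ?_, NH, List.map (fun a => Sum.inr (a, true)) '' NT, hNHB,
    prefixClosed_emb D.hK.prefixClosed hNPp hNPnil, hNH, ?_, ?_, ?_, ?_, ?_⟩
  · rintro (c | ⟨a, b⟩) hx
    · exact hBGl _
    · exact (hBGr _ _).2 ((hBGr a b).1 hx)
  · apply le_antisymm
    · rw [Subgroup.closure_le]
      rintro _ ⟨b, hb, rfl⟩
      exact hBGH b hb
    · intro h hh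
      obtain ⟨w, ⟨hw, rfl⟩, _⟩ := hNH h hh
      exact wordVal_mem _ _ _ fun x hx => Subgroup.subset_closure ⟨x, hNHB w hw x hx, rfl⟩
  · rintro _ ⟨t, ht, rfl⟩ p hp
    obtain ⟨q, hq, rfl⟩ := prefix_map_cases hp
    exact ⟨q, hNTp t ht q hq, rfl⟩
  · intro g
    obtain ⟨t, ⟨ht, hval⟩, huniq⟩ := hNT (QuotientGroup.mk' K g)
    refine ⟨_, ⟨⟨t, ht, rfl⟩, ?_⟩, ?_⟩
    · rw [hmem, map_mul, map_inv, mk_embQ]; exact hval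
    · rintro _ ⟨⟨t', ht', rfl⟩, h'⟩
      rw [hmem, map_mul, map_inv, mk_embQ] at h'
      rw [huniq t' ⟨ht', h'⟩]
  · ext y
    constructor
    · rintro ⟨u, hu, v, hv, rfl⟩
      rw [hN] at hv
      obtain ⟨p, hp, t, ht, rfl⟩ := hv
      exact ⟨_, ⟨u, hu, p, hp, rfl⟩, _, ⟨t, ht, rfl⟩, by simp⟩
    · rintro ⟨_, ⟨u, hu, p, hp, rfl⟩, _, ⟨t, ht, rfl⟩, rfl⟩
      exact ⟨u, hu, p ++ t, hNQ p hp t ht, by simp⟩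
  · rintro _ ⟨u, hu, v, hv, rfl⟩ hyH x hx z hz
    rw [hmem, mk_emb] at hyH
    rw [stack_phi] at hz
    have hvB : ∀ a ∈ v, a ∈ B := by
      have hv' := hv
      rw [hN] at hv'
      obtain ⟨p, hp, t, ht, rfl⟩ := hv'
      obtain rfl := htriv p hp t ht hyH
      simpa using hNPB p hp
    rcases x with c | ⟨a, _ | _⟩
    · rcases hl : v.getLast? with _ | a
      · simp only [phi, hl] at hz
        exact hBGK _ _ hz
      · have ha : a ∈ B := hvB a (List.mem_of_getLast? hl)
        simp only [phi, hl, List.mem_cons, List.mem_append, List.not_mem_nil, or_false] at hz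
        rcases hz with rfl | hz | rfl
        · exact (hBGr _ _).2 ha
        · exact hBGK _ _ hz
        · exact (hBGr _ _).2 ha
    · have ha : a ∈ B := (hBGr _ _).1 hx
      by_cases hl : v.getLast? = some a
      · simp only [phi, hl, if_true, List.mem_singleton] at hz
        subst hz
        exact hx
      · simp only [phi, hl, if_false, List.mem_cons] at hz
        rcases hz with rfl | hz
        · exact (hBGr _ _).2 (hBinv a ha)
        · exact hBGK _ _ hz
    · have ha : a ∈ B := (hBGr _ _).1 hx
      by_cases hl : v.getLast? = some (D.invQ a)
      · simp only [phi, hl, if_true, List.mem_cons] at hz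
        rcases hz with rfl | hz
        · exact (hBGr _ _).2 (hBinv a ha)
        · exact hBGK _ _ hz
      · simp only [phi, hl, if_false, List.mem_append] at hz
        rcases hz with hz | hz
        · exact hBGQ _ (hclos v hv hyH a ha) _ hz
        · exact hBGK _ _ hz
  · rintro x _ ⟨u, hu, v, hv, rfl⟩ _ ⟨u', hu', v', hv', rfl⟩ hx ⟨h, hh, hval⟩
    rw [hmem, mk_emb] at hx
    have hvv' : wordVal D.πQ v' = QuotientGroup.mk' K h * wordVal D.πQ v := by
      have := congrArg (QuotientGroup.mk' K) hval
      rwa [map_mul, mk_emb, mk_emb] at this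
    have hh' := (hmem h).1 hh
    have hphi : ∀ a, ¬ (wordVal D.πQ v ∈ H.map (QuotientGroup.mk' K) ∧ a ∈ B) →
        D.stQ.phi v' a = D.stQ.phi v a := fun a ha =>
      htrans a v hv v' hv' ha ⟨_, hh', hvv'⟩
    rw [hN] at hv hv'
    obtain ⟨p, hp, t, ht, rfl⟩ := hv
    obtain ⟨p', hp', t', ht', rfl⟩ := hv'
    obtain rfl : t' = t := htr p hp t ht p' hp' t' ht' (by rw [hvv', mul_inv_cancel_right]; exact hh')
    rw [stack_phi, stack_phi]
    -- the last letters agree, or both lie in `B`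
    have hlast : ∀ a, ¬ (wordVal D.πQ (p ++ t') ∈ H.map (QuotientGroup.mk' K) ∧ a ∈ B) →
        ((p' ++ t').getLast? = some a ↔ (p ++ t').getLast? = some a) := by
      intro a ha
      rcases List.eq_nil_or_concat t' with rfl | ⟨s, b, rfl⟩
      · have haB : a ∉ B := fun h => ha ⟨by simpa using hNPval p hp, h⟩
        simp only [List.append_nil]
        exact ⟨fun h => absurd (hNPB p' hp' a (List.mem_of_getLast? h)) haB,
          fun h => absurd (hNPB p hp a (List.mem_of_getLast? h)) haB⟩
      · simp [List.getLast?_append]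
    rcases x with c | ⟨a, _ | _⟩
    · have hne : wordVal D.πQ (p ++ t') ∉ H.map (QuotientGroup.mk' K) :=
        fun h => hx ⟨h, hBGl c⟩
      have : (p' ++ t').getLast? = (p ++ t').getLast? :=
        Option.ext fun a => hlast a fun h => hne h.1
      rcases hl : (p ++ t').getLast? with _ | a
      · rw [List.getLast?_eq_none_iff] at hl
        exact absurd (by rw [hl]; exact Subgroup.one_mem _) hne
      · simp only [phi, this, hl]
    · have := hlast a fun h => hx ⟨h.1, (hBGr _ _).2 h.2⟩
      by_cases hl : (p ++ t').getLast? = some a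
      · simp only [phi, hl, this.2 hl, if_true]
      · simp only [phi, hl, mt this.1 hl, if_false]
    · have hx' : ¬ (wordVal D.πQ (p ++ t') ∈ H.map (QuotientGroup.mk' K) ∧ a ∈ B) :=
        fun h => hx ⟨h.1, (hBGr _ _).2 h.2⟩
      have := hlast (D.invQ a) fun h => hx' ⟨h.1, by
        simpa [D.hQ.gen.inv_invol] using hBinv _ h.2⟩
      by_cases hl : (p ++ t').getLast? = some (D.invQ a)
      · simp only [phi, hl, this.2 hl, if_true]
      · simp only [phi, hl, mt this.1 hl, if_false, hphi a hx']

end ExtensionData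

/-- **Theorem (closure under extensions, respecting subgroups).** Let `K` be a normal
subgroup of `G`, let `q : G → G/K` be the quotient homomorphism, and let `H ≤ G` be a
subgroup containing `K`.  If `K` is autostackable and `Q = G/K` is autostackable
respecting the finitely generated subgroup `q(H)`, then `G` is autostackable
respecting `H`. -/
theorem extension_autostackable_respecting
    {G : Type} [Group G] (K : Subgroup G) [K.Normal] (H : Subgroup G)
    (hKH : K ≤ H)
    (hK : Autostackable ↥K)
    (hfg : Group.FG ↥(H.map (QuotientGroup.mk' K)))
    (hQ : AutostackableRespecting (G ⧸ K) (H.map (QuotientGroup.mk' K))) :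
    AutostackableRespecting G H := by
  obtain ⟨C, _, πK, invK, stK, hK, hKauto⟩ := hK
  obtain ⟨A, _, πQ, invQ, stQ, hQ, hQauto, hresp⟩ := hQ
  choose lift hlift using fun a => QuotientGroup.mk'_surjective K (πQ a)
  let D : ExtensionData K C A :=
    { πK, invK, stK, hK, πQ, invQ, stQ, hQ, lift, hlift }
  obtain ⟨W, hW, hphi⟩ := D.finite_phi
  obtain ⟨n, hn⟩ := (hW.image List.length).bddAbove
  exact ⟨C ⊕ A × Bool, inferInstance, D.val, D.inv, D.stack n,
    D.isStacking n fun u hu v hv x => hn ⟨_, hphi u hu v hv x, rfl⟩,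
    D.isAuto hKauto hQauto n, D.respects n H hKH hresp⟩
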